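/- Let α ∈ (0,1/2) and let E ⊆ 𝕋 be a Carleson set of Lebesgue measure zero. Then the two-sided estimate D_ζ(f_{α,E}) ≍ dist(ζ,E)^{2α−1}, with implied constants independent of ζ ∈ 𝕋∖E, holds if and only if E is an 𝓛₁-set. -/

import Mathlib

open MeasureTheory Real Set

noncomputable section

/-- The unit circle in `ℂ`. -/
def circleT : Set ℂ := Metric.sphere (0 : ℂ) 1

/-- Arc-length parametrization of the unit circle. -/
def cpt (θ : ℝ) : ℂ := Complex.exp (θ * Complex.I)

/-- Distance from a point to a set. -/
def dE (E : Set ℂ) (ζ : ℂ) : ℝ := Metric.infDist ζ E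

/-- Arc-length integral over the whole circle. -/
def circInt (f : ℂ → ℝ) : ℝ := ∫ θ in Set.Ioc 0 (2 * π), f (cpt θ)

/-- Arc-length integral over a subset `Λ` of the circle. -/
def circIntOn (Λ : Set ℂ) (f : ℂ → ℝ) : ℝ :=
  ∫ θ in {θ ∈ Set.Ioc 0 (2 * π) | cpt θ ∈ Λ}, f (cpt θ)

/-- `E` has arc-length (Lebesgue) measure zero. -/
def MeasureZeroOnCircle (E : Set ℂ) : Prop :=
  volume {θ ∈ Set.Ioc 0 (2 * π) | cpt θ ∈ E} = 0

/-- `E` is a Carleson set: `∫_𝕋 log dist(ζ,E) |dζ| > -∞`. -/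
def CarlesonSet (E : Set ℂ) : Prop :=
  IntegrableOn (fun θ => Real.log (dE E (cpt θ))) (Set.Ioc 0 (2 * π)) volume

/-- `I(ζ,E)`: the connected component of `𝕋 \ E` containing `ζ`. -/
def compArc (E : Set ℂ) (ζ : ℂ) : Set ℂ := connectedComponentIn (circleT \ E) ζ

/-- `Γ(ζ,E)`. -/
def GammaSet (E : Set ℂ) (ζ : ℂ) : Set ℂ :=
  {ζ' ∈ circleT \ compArc E ζ | dE E ζ' ≤ dE E ζ}

/-- `Σ(ζ,E)`. -/
def SigmaSet (E : Set ℂ) (ζ : ℂ) : Set ℂ :=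
  {ζ' ∈ circleT \ compArc E ζ | dE E ζ ≤ dE E ζ'}

/-- The Richter–Sundberg integrand for the outer function with boundary modulus
`ω(dist(·,E))`. -/
def RSker (ω : ℝ → ℝ) (E : Set ℂ) (ζ ζ' : ℂ) : ℝ :=
  ((ω (dE E ζ')) ^ 2 - (ω (dE E ζ)) ^ 2
    - 2 * (ω (dE E ζ)) ^ 2 * Real.log (ω (dE E ζ') / ω (dE E ζ))) / ‖ζ - ζ'‖ ^ 2

/-- Local Dirichlet integral `D_ζ(f_{ω,E})` (Richter–Sundberg formula). -/
def locDir (ω : ℝ → ℝ) (E : Set ℂ) (ζ : ℂ) : ℝ :=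
  (1 / (2 * π)) * circInt (fun ζ' => RSker ω E ζ ζ')

/-- Local Dirichlet integral restricted to `Λ`. -/
def locDirOn (ω : ℝ → ℝ) (E : Set ℂ) (Λ : Set ℂ) (ζ : ℂ) : ℝ :=
  (1 / (2 * π)) * circIntOn Λ (fun ζ' => RSker ω E ζ ζ')

/-- `E` is an `𝓛₁`-set. -/
def L1Set (E : Set ℂ) : Prop :=
  ∃ C > 0, ∀ ζ ∈ circleT \ E,
    circIntOn (GammaSet E ζ)
      (fun ζ' => Real.log (dE E ζ / dE E ζ') / ‖ζ - ζ'‖ ^ 2) ≤ C / dE E ζ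

/-- The `𝓛₂` inequality with constant `C`. -/
def L2With (E : Set ℂ) (C : ℝ) : Prop :=
  ∀ ζ ∈ circleT \ E,
    circIntOn (GammaSet E ζ)
      (fun ζ' => (Real.log (dE E ζ / dE E ζ')) ^ 2 / ‖ζ - ζ'‖ ^ 2) ≤ C / dE E ζ

/-- `E` is an `𝓛₂`-set. -/
def L2Set (E : Set ℂ) : Prop := ∃ C > 0, L2With E C

/-- Supremum of `dist(·,E)` over the arc `cpt '' (a,b]`. -/
def arcSup (E : Set ℂ) (a b : ℝ) : ℝ := sSup ((fun θ => dE E (cpt θ)) '' Set.Ioc a b)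

/-- `E` is a `𝒦`-set (Kotochigov). -/
def KSet (E : Set ℂ) : Prop :=
  ∃ c > 0, ∀ a b : ℝ, a < b → b ≤ a + 2 * π → c * (b - a) ≤ arcSup E a b

/-- Integral of a weight over the arc `cpt '' (a,b]` (with respect to arc length). -/
def arcInt (w : ℂ → ℝ) (a b : ℝ) : ℝ := ∫ θ in Set.Ioc a b, w (cpt θ)

/-- Double logarithmic integral of a weight over an arc. -/
def arcDouble (w : ℂ → ℝ) (a b : ℝ) : ℝ :=
  ∫ θ in Set.Ioc a b, (∫ θ' in Set.Ioc a b,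
    Real.log (1 / ‖cpt θ - cpt θ'‖) * w (cpt θ) * w (cpt θ'))

/-- Arc-length measure of `{ζ ∈ I : dist(ζ,E) ≤ t}` for the arc `cpt '' (a,b]`. -/
def sublevelMeas (E : Set ℂ) (a b t : ℝ) : ℝ :=
  (volume {θ ∈ Set.Ioc a b | dE E (cpt θ) ≤ t}).toReal

/-- Arc-length measure of `E_t = {ζ ∈ 𝕋 : dist(ζ,E) ≤ t}`. -/
def EtMeas (E : Set ℂ) (t : ℝ) : ℝ := sublevelMeas E 0 (2 * π) t

/-- The open unit disc. -/
def unitDisc : Set ℂ := Metric.ball (0 : ℂ) 1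

/-- Membership in the (holomorphic) Dirichlet space `𝒟`. -/
def MemDirichlet (f : ℂ → ℂ) : Prop :=
  DifferentiableOn ℂ f unitDisc ∧
  (∃ M : ℝ, ∀ r ∈ Set.Ioo (0 : ℝ) 1,
    (∫ θ in Set.Ioc 0 (2 * π), ‖f ((r : ℂ) * cpt θ)‖ ^ 2) ≤ M) ∧
  IntegrableOn (fun z => ‖deriv f z‖ ^ 2) unitDisc volume

/-- `f` is a multiplier of the Dirichlet space `𝒟`. -/
def IsMultiplierD (f : ℂ → ℂ) : Prop :=
  ∀ g : ℂ → ℂ, MemDirichlet g → MemDirichlet (fun z => f z * g z)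

/-- The outer function `f_{ω,E}` with boundary modulus `ω(dist(·,E))`. -/
def outerFun (ω : ℝ → ℝ) (E : Set ℂ) (z : ℂ) : ℂ :=
  Complex.exp ((((2 * π)⁻¹ : ℝ) : ℂ) * ∫ θ in Set.Ioc 0 (2 * π),
    ((cpt θ + z) / (cpt θ - z)) * ((Real.log (ω (dE E (cpt θ))) : ℝ) : ℂ))

/-- `log ω(dist(·,E)) ∈ L¹(𝕋)`. -/
def LogOmegaInt (ω : ℝ → ℝ) (E : Set ℂ) : Prop :=
  IntegrableOn (fun θ => Real.log (ω (dE E (cpt θ)))) (Set.Ioc 0 (2 * π)) volume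

/-- Standing hypotheses on `ω` (with derivative `ω'`): continuous, positive, increasing on
`(0,π]`, differentiable with derivative `ω'`, `t ↦ ω(t^γ)` concave, and `t ↦ tω'(t)/ω(t)`
increasing. -/
def OmegaHyp (ω ω' : ℝ → ℝ) (γ : ℝ) : Prop :=
  ContinuousOn ω (Set.Ioc 0 π) ∧
  (∀ t ∈ Set.Ioc (0 : ℝ) π, 0 < ω t) ∧
  MonotoneOn ω (Set.Ioc 0 π) ∧
  (∀ t ∈ Set.Ioo (0 : ℝ) π, HasDerivAt ω (ω' t) t) ∧
  ConcaveOn ℝ (Set.Ioc 0 (π ^ γ⁻¹)) (fun t => ω (t ^ γ)) ∧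
  MonotoneOn (fun t => t * ω' t / ω t) (Set.Ioo 0 π)

/-- The generalized Cantor set `E_{(ζ_n)}` (with `ξ k` playing the role of `ζ_{k+1}`). -/
def gCantorSet (ξ : ℕ → ℝ) : Set ℂ :=
  {z | ∃ ε : ℕ → Bool, z = Complex.exp (((2 * π : ℝ) : ℂ) * Complex.I *
    ((∑' n : ℕ, (if ε n then (1 : ℝ) else 0) * (∏ k ∈ Finset.range n, ξ k) * (1 - ξ n) : ℝ) : ℂ))}

end

/-!
Write `δ = dist(ζ,E)`, `x = dist(ζ',E) / δ`, `ρ = ‖ζ - ζ'‖ / δ` and `β = 2 * α`. The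
Richter–Sundberg integrand is `δ ^ (β - 2) * h x / ρ ^ 2` with `h x = x ^ β - 1 - β * log x ≥ 0`,
so the estimate asks that `∫ h x / ρ ^ 2 |dζ'|` be comparable to `δ`.

Near `x = 1` the profile `h` is quadratic, and `|x - 1| ≤ ρ`, so the diagonal is harmless. Away from
it `h x ≤ x ^ β + log⁺ x⁻¹`, and the power part contributes `O(δ)` because `β < 1`. On the
complementary arc of `ζ` the distance to `E` is attained at one of the two endpoints, so `log⁺ x⁻¹`
is dominated by two translates of an integrable radial logarithm and again contributes `O(δ)`.
Off this arc `ρ ≥ 1`, and the logarithmic part is exactly the `𝓛₁` integral over `Γ(ζ,E)`.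
Conversely `log x⁻¹` is at most a multiple of `h x + 1` on `Γ(ζ,E)`, which recovers the `𝓛₁`
condition. The lower bound always holds: on the ball of radius `δ / 2` about a point of `E` nearest
to `ζ` one has `x ≤ 1 / 2` and `ρ ≤ 3 / 2`.
-/

section Profile

variable {β x y : ℝ}

/-- The profile of the Richter–Sundberg integrand for `ω t = t ^ α`: with `β = 2 * α`, `δ` and `δ'`
the distances of `ζ` and `ζ'` to `E`, its numerator is `δ ^ β * rsProfile β (δ' / δ)`. -/
noncomputable def rsProfile (β x : ℝ) : ℝ := x ^ β - 1 - β * log x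

lemma measurable_rsProfile (β : ℝ) : Measurable (rsProfile β) := by
  unfold rsProfile
  fun_prop

lemma rsProfile_eq_exp (hx : 0 < x) : rsProfile β x = exp (β * log x) - 1 - β * log x := by
  rw [rsProfile, rpow_def_of_pos hx, mul_comm (log x)]

lemma rsProfile_nonneg (hx : 0 < x) : 0 ≤ rsProfile β x := by
  rw [rsProfile_eq_exp hx]
  linarith [add_one_le_exp (β * log x)]

lemma rsProfile_pos (hβ : β ≠ 0) (hx : 0 < x) (hx1 : x ≠ 1) : 0 < rsProfile β x := by
  rw [rsProfile_eq_exp hx]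
  linarith [add_one_lt_exp (mul_ne_zero hβ (log_ne_zero_of_pos_of_ne_one hx hx1))]

/-- Convexity of `s ↦ exp (-s)`: the slope of `s ↦ exp (-s) - 1 + s` from `0` is increasing. -/
lemma rsProfile_mul_log_inv_le (hx : 0 < x) (hxy : x ≤ y) (hy : y ≤ 1) :
    rsProfile β y * log x⁻¹ ≤ rsProfile β x * log y⁻¹ := by
  have hlog : log x ≤ log y := log_le_log hx hxy
  have hlogy : log y ≤ 0 := log_nonpos (hx.le.trans hxy) hy
  rw [rsProfile_eq_exp hx, rsProfile_eq_exp (hx.trans_le hxy), log_inv, log_inv]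
  rcases (hlog.trans hlogy).eq_or_lt with hlogx | hlogx
  · have : log y = 0 := by linarith
    simp [hlogx, this]
  set s := log y / log x
  have hs : log y = s * log x := (div_mul_cancel₀ _ hlogx.ne).symm
  have hs0 : 0 ≤ s := div_nonneg_of_nonpos hlogy hlogx.le
  have hs1 : s ≤ 1 := (div_le_one_of_neg hlogx).2 hlog
  have hconv := convexOn_exp.2 (mem_univ (β * log x)) (mem_univ 0) hs0 (sub_nonneg.2 hs1)
    (add_sub_cancel s 1)
  simp only [smul_eq_mul, mul_zero, add_zero, exp_zero, mul_one] at hconv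
  rw [hs, show β * (s * log x) = s * (β * log x) by ring]
  nlinarith

lemma rsProfile_antitoneOn : AntitoneOn (rsProfile β) (Ioc 0 1) := by
  intro x hx y hy hxy
  rcases hxy.eq_or_lt with rfl | hlt
  · rfl
  have hlogx : 0 < log x⁻¹ := log_pos ((one_lt_inv₀ hx.1).2 (hlt.trans_le hy.2))
  have hlog : log y⁻¹ ≤ log x⁻¹ :=
    log_le_log (inv_pos.2 hy.1) (inv_anti₀ hx.1 hxy)
  exact le_of_mul_le_mul_right ((rsProfile_mul_log_inv_le hx.1 hxy hy.2).trans
    (mul_le_mul_of_nonneg_left hlog (rsProfile_nonneg hx.1))) hlogx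

lemma log_inv_le_rsProfile_div_add (hβ : β ≠ 0) (hx : 0 < x) (hy : 0 < y) (hy1 : y < 1) :
    log x⁻¹ ≤ log y⁻¹ * (rsProfile β x / rsProfile β y + 1) := by
  have hprof := rsProfile_pos hβ hy hy1.ne
  have hlogy : 0 ≤ log y⁻¹ := log_nonneg ((one_le_inv₀ hy).2 hy1.le)
  rcases le_total x y with hxy | hxy
  · have hslope : log x⁻¹ ≤ log y⁻¹ * (rsProfile β x / rsProfile β y) := by
      rw [← mul_div_assoc, le_div_iff₀ hprof]
      linarith [rsProfile_mul_log_inv_le (β := β) hx hxy hy1.le]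
    linarith
  · have hlog : log x⁻¹ ≤ log y⁻¹ := log_le_log (inv_pos.2 hx) (inv_anti₀ hy hxy)
    have : 0 ≤ rsProfile β x / rsProfile β y := div_nonneg (rsProfile_nonneg hx) hprof.le
    nlinarith

lemma abs_log_le_two_mul_abs_sub_one (hx : |x - 1| ≤ 1 / 2) : |log x| ≤ 2 * |x - 1| := by
  have hhalf : 1 / 2 ≤ x := by linarith [(abs_le.1 hx).1]
  have hx0 : 0 < x := by linarith
  have hupper : log x ≤ |x - 1| := (log_le_sub_one_of_pos hx0).trans (le_abs_self _)
  have hlower : -(2 * |x - 1|) ≤ 1 - x⁻¹ := by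
    rw [show 1 - x⁻¹ = (x - 1) / x by field_simp, le_div_iff₀ hx0]
    nlinarith [neg_abs_le (x - 1), abs_nonneg (x - 1)]
  exact abs_le.2 ⟨hlower.trans (one_sub_inv_le_log_of_pos hx0), by linarith [abs_nonneg (x - 1)]⟩

lemma rsProfile_le_four_mul_sq (hβ : β ∈ Icc 0 1) (hx : |x - 1| ≤ 1 / 2) :
    rsProfile β x ≤ 4 * (x - 1) ^ 2 := by
  have hx0 : 0 < x := by linarith [(abs_le.1 hx).1]
  have hs : |β * log x| ≤ 2 * |x - 1| := by
    rw [abs_mul, abs_of_nonneg hβ.1]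
    exact (mul_le_of_le_one_left (abs_nonneg _) hβ.2).trans (abs_log_le_two_mul_abs_sub_one hx)
  calc rsProfile β x = exp (β * log x) - 1 - β * log x := rsProfile_eq_exp hx0
    _ ≤ (β * log x) ^ 2 := (le_abs_self _).trans (abs_exp_sub_one_sub_id_le (by linarith))
    _ ≤ (2 * |x - 1|) ^ 2 := sq_le_sq' (by linarith [neg_abs_le (β * log x)])
        ((le_abs_self _).trans hs)
    _ = 4 * (x - 1) ^ 2 := by rw [mul_pow, sq_abs]; norm_num

lemma rsProfile_le_rpow_add_posLog (hβ : β ∈ Icc 0 1) : rsProfile β x ≤ x ^ β + log⁺ x⁻¹ := by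
  have hlog : -log x ≤ log⁺ x⁻¹ := by
    rw [← log_inv]
    exact le_max_right _ _
  have : -(β * log x) ≤ log⁺ x⁻¹ := by
    nlinarith [hβ.1, mul_le_of_le_one_left (posLog_nonneg (x := x⁻¹)) hβ.2]
  rw [rsProfile]
  linarith

variable {ρ : ℝ}

lemma rsProfile_div_sq_le_of_half_le (hβ : β ∈ Icc 0 1) (hx : 0 ≤ x) (hxρ : x ≤ 1 + ρ)
    (hρ : 1 / 2 ≤ ρ) :
    rsProfile β x / ρ ^ 2 ≤ 9 * (1 + ρ) ^ (β - 2) + log⁺ x⁻¹ / ρ ^ 2 := by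
  have hρ0 : 0 < ρ := by linarith
  have hρ1 : 0 < 1 + ρ := by linarith
  have hinv : (ρ ^ 2)⁻¹ ≤ 9 / (1 + ρ) ^ 2 := by
    rw [inv_le_comm₀ (by positivity) (by positivity), inv_div, div_le_iff₀ (by norm_num)]
    nlinarith
  calc rsProfile β x / ρ ^ 2 ≤ ((1 + ρ) ^ β + log⁺ x⁻¹) / ρ ^ 2 := by
        gcongr
        exact (rsProfile_le_rpow_add_posLog hβ).trans
          (add_le_add_left (rpow_le_rpow hx hxρ hβ.1) _)
    _ = (1 + ρ) ^ β * (ρ ^ 2)⁻¹ + log⁺ x⁻¹ / ρ ^ 2 := by rw [add_div, div_eq_mul_inv]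
    _ ≤ (1 + ρ) ^ β * (9 / (1 + ρ) ^ 2) + log⁺ x⁻¹ / ρ ^ 2 := by gcongr
    _ = 9 * (1 + ρ) ^ (β - 2) + log⁺ x⁻¹ / ρ ^ 2 := by
        rw [rpow_sub hρ1, rpow_two]
        ring

lemma rsProfile_div_sq_le (hβ : β ∈ Icc 0 1) (hx : 0 ≤ x) (hxρ : |x - 1| ≤ ρ) :
    rsProfile β x / ρ ^ 2 ≤ 9 * (1 + ρ) ^ (β - 2) + 4 * log⁺ x⁻¹ := by
  have hlog : 0 ≤ log⁺ x⁻¹ := posLog_nonneg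
  have hρ0 : 0 ≤ ρ := (abs_nonneg _).trans hxρ
  rcases le_total ρ (1 / 2) with hρ | hρ
  · have hprof : rsProfile β x ≤ 4 * ρ ^ 2 :=
      (rsProfile_le_four_mul_sq hβ (hxρ.trans hρ)).trans <| by
        rw [← sq_abs (x - 1)]
        gcongr
    have htail : (4 / 9 : ℝ) ≤ (1 + ρ) ^ (β - 2) :=
      calc (4 / 9 : ℝ) = (3 / 2) ^ (-2 : ℝ) := by rw [rpow_neg (by norm_num)]; norm_num
        _ ≤ (1 + ρ) ^ (-2 : ℝ) :=
            rpow_le_rpow_of_nonpos (by positivity) (by linarith) (by norm_num)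
        _ ≤ (1 + ρ) ^ (β - 2) :=
            rpow_le_rpow_of_exponent_le (by linarith) (by linarith [hβ.1])
    linarith [div_le_of_le_mul₀ (sq_nonneg ρ) (by norm_num) hprof]
  · refine (rsProfile_div_sq_le_of_half_le hβ hx (by linarith [le_abs_self (x - 1)]) hρ).trans ?_
    gcongr
    have : 1 ≤ 4 * ρ ^ 2 := by nlinarith
    rw [div_le_iff₀ (by positivity)]
    nlinarith

end Profile

section Circle

lemma cpt_periodic : Function.Periodic cpt (2 * π) := by
  intro θ
  simp only [cpt]
  push_cast
  rw [add_mul, Complex.exp_add, Complex.exp_two_pi_mul_I, mul_one]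

lemma continuous_cpt : Continuous cpt := by
  unfold cpt
  fun_prop

lemma norm_cpt (θ : ℝ) : ‖cpt θ‖ = 1 := Complex.norm_exp_ofReal_mul_I θ

lemma cpt_mem_circleT (θ : ℝ) : cpt θ ∈ circleT := mem_sphere_zero_iff_norm.2 (norm_cpt θ)

lemma cpt_add (a b : ℝ) : cpt (a + b) = cpt a * cpt b := by
  simp only [cpt, Complex.ofReal_add, add_mul, Complex.exp_add]

lemma exists_cpt_eq {z : ℂ} (hz : z ∈ circleT) (t : ℝ) : ∃ θ, |t - θ| ≤ π ∧ cpt θ = z := by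
  have ht : cpt t ≠ 0 := Complex.exp_ne_zero _
  have hnorm : ‖z / cpt t‖ = 1 := by
    rw [norm_div, mem_sphere_zero_iff_norm.1 hz, norm_cpt, div_one]
  have harg : cpt (z / cpt t).arg = z / cpt t := by
    have hpolar := Complex.norm_mul_exp_arg_mul_I (z / cpt t)
    rwa [hnorm, Complex.ofReal_one, one_mul] at hpolar
  refine ⟨t + (z / cpt t).arg, by simpa using Complex.abs_arg_le_pi (z / cpt t), ?_⟩
  rw [cpt_add, harg, mul_div_cancel₀ _ ht]

lemma norm_cpt_sub_cpt (a b : ℝ) : ‖cpt a - cpt b‖ = 2 * |sin ((a - b) / 2)| := by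
  have h : cpt a - cpt b = cpt b * (Complex.exp (Complex.I * ((a - b : ℝ) : ℂ)) - 1) := by
    rw [mul_sub, mul_one, mul_comm Complex.I]
    change _ = cpt b * cpt (a - b) - cpt b
    rw [← cpt_add, add_sub_cancel]
  rw [h, norm_mul, norm_cpt, Complex.norm_exp_I_mul_ofReal_sub_one, norm_mul]
  simp

lemma norm_cpt_sub_cpt_le (a b : ℝ) : ‖cpt a - cpt b‖ ≤ |a - b| := by
  have := abs_sin_le_abs (x := (a - b) / 2)
  rw [abs_div, abs_two] at this
  rw [norm_cpt_sub_cpt]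
  linarith

lemma mul_abs_sub_le_norm_cpt_sub_cpt {a b : ℝ} (h : |a - b| ≤ π) :
    2 / π * |a - b| ≤ ‖cpt a - cpt b‖ := by
  have hhalf : |(a - b) / 2| = |a - b| / 2 := by rw [abs_div, abs_two]
  have := mul_abs_le_abs_sin (x := (a - b) / 2) (by linarith)
  rw [norm_cpt_sub_cpt]
  rw [hhalf] at this
  linarith

lemma norm_cpt_sub_cpt_mono {a b c d : ℝ} (h : |a - b| ≤ |c - d|) (hcd : |c - d| ≤ π) :
    ‖cpt a - cpt b‖ ≤ ‖cpt c - cpt d‖ := by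
  have habs (x y : ℝ) (hxy : |x - y| ≤ π) : ‖cpt x - cpt y‖ = 2 * sin (|x - y| / 2) := by
    have hhalf : |(x - y) / 2| = |x - y| / 2 := by rw [abs_div, abs_two]
    rw [norm_cpt_sub_cpt, abs_sin_eq_sin_abs_of_abs_le_pi (by linarith [pi_pos]), hhalf]
  rw [habs a b (h.trans hcd), habs c d hcd]
  gcongr
  apply sin_le_sin_of_le_of_le_pi_div_two <;> linarith [abs_nonneg (a - b), pi_pos]

end Circle

section ArcLength

/-- The arc-length measure `|dζ|` of the unit circle, as a measure on `ℂ`. -/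
noncomputable def arcLength : Measure ℂ := (volume.restrict (Ioc 0 (2 * π))).map cpt

instance : IsFiniteMeasure arcLength := by
  unfold arcLength
  infer_instance

lemma arcLength_apply {s : Set ℂ} (hs : MeasurableSet s) :
    arcLength s = volume (cpt ⁻¹' s ∩ Ioc 0 (2 * π)) := by
  rw [arcLength, Measure.map_apply continuous_cpt.measurable hs,
    Measure.restrict_apply (continuous_cpt.measurable hs)]

lemma arcLength_eq_map (t : ℝ) : arcLength = (volume.restrict (Ioc (t - π) (t + π))).map cpt := by
  have hfund (a : ℝ) := isAddFundamentalDomain_Ioc two_pi_pos a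
  ext s hs
  have hperiodic (g : AddSubgroup.zmultiples (2 * π)) :
      (fun θ : ℝ => g +ᵥ θ) ⁻¹' (cpt ⁻¹' s) = cpt ⁻¹' s := by
    obtain ⟨_, n, rfl⟩ := g
    ext θ
    have : cpt (n • (2 * π) + θ) = cpt θ := by rw [add_comm, cpt_periodic.zsmul n θ]
    simp only [mem_preimage, AddSubgroup.vadd_def, vadd_eq_add, this]
  have := (hfund 0).measure_set_eq (hfund (t - π)) (continuous_cpt.measurable hs) hperiodic
  rw [zero_add, show t - π + 2 * π = t + π by ring] at this
  rw [arcLength_apply hs, this, Measure.map_apply continuous_cpt.measurable hs,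
    Measure.restrict_apply (continuous_cpt.measurable hs)]

lemma circInt_eq_integral {f : ℂ → ℝ} (hf : AEStronglyMeasurable f arcLength) :
    circInt f = ∫ z, f z ∂arcLength :=
  (integral_map continuous_cpt.aemeasurable hf).symm

lemma circIntOn_eq_setIntegral {s : Set ℂ} (hs : MeasurableSet s) {f : ℂ → ℝ}
    (hf : AEStronglyMeasurable f arcLength) : circIntOn s f = ∫ z in s, f z ∂arcLength := by
  rw [arcLength, setIntegral_map hs hf continuous_cpt.aemeasurable,
    Measure.restrict_restrict (continuous_cpt.measurable hs), inter_comm]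
  rfl

lemma ae_arcLength_mem_circleT : ∀ᵐ z ∂arcLength, z ∈ circleT :=
  (ae_map_iff continuous_cpt.aemeasurable Metric.isClosed_sphere.measurableSet).2
    (.of_forall cpt_mem_circleT)

lemma MeasureZeroOnCircle.ae_notMem {E : Set ℂ} (hE : MeasurableSet E)
    (h : MeasureZeroOnCircle E) : ∀ᵐ z ∂arcLength, z ∉ E := by
  rw [← measure_eq_zero_iff_ae_notMem, arcLength_apply hE, inter_comm]
  exact h

lemma CarlesonSet.integrable_log {E : Set ℂ} (h : CarlesonSet E) :
    Integrable (fun z => log (dE E z)) arcLength :=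
  (integrable_map_measure (measurable_log.comp (Metric.continuous_infDist_pt E).measurable
    |>.aestronglyMeasurable) continuous_cpt.aemeasurable).2 h

lemma two_mul_le_arcLength_closedBall {ζ : ℂ} (hζ : ζ ∈ circleT) {r : ℝ} (hr : 0 ≤ r)
    (hrπ : r ≤ π) : 2 * r ≤ arcLength.real (Metric.closedBall ζ r) := by
  obtain ⟨t, -, rfl⟩ := exists_cpt_eq hζ 0
  have hsub : Ioc (t - r) (t + r) ⊆
      cpt ⁻¹' Metric.closedBall (cpt t) r ∩ Ioc (t - π) (t + π) := by
    refine fun θ hθ => ⟨?_, by constructor <;> linarith [hθ.1, hθ.2]⟩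
    rw [mem_preimage, mem_closedBall_iff_norm]
    refine (norm_cpt_sub_cpt_le θ t).trans (abs_le.2 ?_)
    constructor <;> linarith [hθ.1, hθ.2]
  have hball := Metric.isClosed_closedBall (x := cpt t) (ε := r) |>.measurableSet
  rw [measureReal_def, arcLength_eq_map t, Measure.map_apply continuous_cpt.measurable hball,
    Measure.restrict_apply (continuous_cpt.measurable hball), ← measureReal_def]
  calc 2 * r = volume.real (Ioc (t - r) (t + r)) := by
        rw [Real.volume_real_Ioc_of_le (by linarith)]
        ring
    _ ≤ _ := measureReal_mono hsub (measure_ne_top_of_subset inter_subset_right (by simp))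

section Radial

variable {f : ℝ → ℝ} {ζ : ℂ} {δ : ℝ}

lemma ae_comp_norm_cpt_sub_div_le (hanti : AntitoneOn f (Ioi 0)) (t : ℝ) (hδ : 0 < δ) :
    ∀ᵐ θ ∂volume.restrict (Ioc (t - π) (t + π)),
      f (‖cpt t - cpt θ‖ / δ) ≤ f |(θ - t) / (π / 2 * δ)| := by
  filter_upwards [ae_restrict_mem measurableSet_Ioc, ae_restrict_of_ae (Measure.ae_ne volume t)]
    with θ hθ hne
  have hle : |t - θ| ≤ π := abs_le.2 (by constructor <;> linarith [hθ.1, hθ.2])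
  have hchord := mul_abs_sub_le_norm_cpt_sub_cpt hle
  rw [abs_sub_comm] at hchord
  have hscale : |(θ - t) / (π / 2 * δ)| = 2 / π * |θ - t| / δ := by
    rw [abs_div, abs_of_pos (by positivity : 0 < π / 2 * δ)]
    field_simp
  rw [hscale]
  have hpos : 0 < 2 / π * |θ - t| := mul_pos (by positivity) (abs_pos.2 (sub_ne_zero.2 hne))
  exact hanti (div_pos hpos hδ) (div_pos (hpos.trans_le hchord) hδ) (by gcongr)

lemma integrable_comp_norm_sub_div (hf : Measurable f) (hanti : AntitoneOn f (Ioi 0))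
    (hnonneg : ∀ x, 0 ≤ x → 0 ≤ f x) (hint : Integrable fun v => f |v|) (hζ : ζ ∈ circleT)
    (hδ : 0 < δ) :
    Integrable (fun z => f (‖ζ - z‖ / δ)) arcLength := by
  obtain ⟨t, -, rfl⟩ := exists_cpt_eq hζ 0
  have hmeas : Measurable fun z => f (‖cpt t - z‖ / δ) := hf.comp (by fun_prop)
  rw [arcLength_eq_map t, integrable_map_measure hmeas.aestronglyMeasurable
    continuous_cpt.aemeasurable]
  refine (((hint.comp_div (by positivity : π / 2 * δ ≠ 0)).comp_sub_right t).integrableOn).mono'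
    (hmeas.comp continuous_cpt.measurable).aestronglyMeasurable ?_
  filter_upwards [ae_comp_norm_cpt_sub_div_le hanti t hδ] with θ hθ
  rwa [Function.comp_apply, norm_of_nonneg (hnonneg _ (by positivity))]

lemma integral_comp_norm_sub_div_le (hf : Measurable f) (hanti : AntitoneOn f (Ioi 0))
    (hnonneg : ∀ x, 0 ≤ x → 0 ≤ f x) (hint : Integrable fun v => f |v|) (hζ : ζ ∈ circleT)
    (hδ : 0 < δ) :
    ∫ z, f (‖ζ - z‖ / δ) ∂arcLength ≤ π / 2 * (∫ v, f |v|) * δ := by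
  obtain ⟨t, -, rfl⟩ := exists_cpt_eq hζ 0
  have hmeas : Measurable fun z => f (‖cpt t - z‖ / δ) := hf.comp (by fun_prop)
  have hscaled : Integrable fun θ => f |(θ - t) / (π / 2 * δ)| :=
    (hint.comp_div (by positivity : π / 2 * δ ≠ 0)).comp_sub_right t
  rw [arcLength_eq_map t, integral_map continuous_cpt.aemeasurable hmeas.aestronglyMeasurable]
  calc ∫ θ in Ioc (t - π) (t + π), f (‖cpt t - cpt θ‖ / δ)
      ≤ ∫ θ in Ioc (t - π) (t + π), f |(θ - t) / (π / 2 * δ)| :=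
        integral_mono_of_nonneg (.of_forall fun _ => hnonneg _ (by positivity)) hscaled.integrableOn
          (ae_comp_norm_cpt_sub_div_le hanti t hδ)
    _ ≤ ∫ θ, f |(θ - t) / (π / 2 * δ)| :=
        setIntegral_le_integral hscaled (.of_forall fun _ => hnonneg _ (by positivity))
    _ = π / 2 * (∫ v, f |v|) * δ := by
        rw [integral_sub_right_eq_self (fun θ => f |θ / (π / 2 * δ)|),
          Measure.integral_comp_div (fun v => f |v|), abs_of_pos (by positivity), smul_eq_mul]
        ring

end Radial

lemma integrable_one_add_abs_rpow {s : ℝ} (hs : s < -1) :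
    Integrable fun v : ℝ => (1 + |v|) ^ s := by
  have := integrable_one_add_norm (E := ℝ) (μ := volume) (r := -s)
    (by rw [Module.finrank_self]; push_cast; linarith)
  simpa using this

lemma antitoneOn_one_add_rpow {s : ℝ} (hs : s ≤ 0) :
    AntitoneOn (fun v : ℝ => (1 + v) ^ s) (Ioi 0) := fun v hv _ _ hvw =>
  rpow_le_rpow_of_nonpos (add_pos one_pos hv) (by gcongr) hs

lemma integrable_posLog_inv_abs : Integrable fun v : ℝ => log⁺ |v|⁻¹ := by
  have hlog : IntegrableOn (fun v => -log v) (Ioc (-1) 1) :=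
    ((intervalIntegrable_iff_integrableOn_Ioc_of_le (by norm_num)).1
      intervalIntegral.intervalIntegrable_log').neg
  refine (hlog.integrable_indicator measurableSet_Ioc).mono' (by fun_prop) (.of_forall fun v => ?_)
  rw [norm_of_nonneg posLog_nonneg]
  by_cases hv : v ∈ Ioc (-1) 1
  · rw [indicator_of_mem hv]
    have habs : |v| ≤ 1 := abs_le.2 ⟨hv.1.le, hv.2⟩
    refine max_le ?_ (by rw [log_inv, log_abs])
    rw [← log_abs]
    exact neg_nonneg.2 (log_nonpos (abs_nonneg v) habs)
  · rw [indicator_of_notMem hv]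
    have habs : 1 ≤ |v| := by
      contrapose! hv
      exact ⟨(abs_lt.1 hv).1, (abs_lt.1 hv).2.le⟩
    refine ((posLog_eq_zero_iff _).2 ?_).le
    rw [abs_inv, abs_abs]
    exact inv_le_one_of_one_le₀ habs

lemma antitoneOn_posLog_inv : AntitoneOn (fun v : ℝ => log⁺ v⁻¹) (Ioi 0) := fun _ hv _ hw hvw =>
  posLog_le_posLog (inv_nonneg.2 (mem_Ioi.1 hw).le) (inv_anti₀ hv hvw)

variable {ζ : ℂ} {δ s : ℝ}

lemma integrable_one_add_norm_sub_div_rpow (hs : s < -1) (hζ : ζ ∈ circleT) (hδ : 0 < δ) :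
    Integrable (fun z => (1 + ‖ζ - z‖ / δ) ^ s) arcLength :=
  integrable_comp_norm_sub_div (f := fun v => (1 + v) ^ s) (by fun_prop)
    (antitoneOn_one_add_rpow (by linarith)) (fun v hv => by positivity)
    (integrable_one_add_abs_rpow hs) hζ hδ

lemma integral_one_add_norm_sub_div_rpow_le (hs : s < -1) (hζ : ζ ∈ circleT) (hδ : 0 < δ) :
    ∫ z, (1 + ‖ζ - z‖ / δ) ^ s ∂arcLength ≤ π / 2 * (∫ v : ℝ, (1 + |v|) ^ s) * δ :=
  integral_comp_norm_sub_div_le (f := fun v => (1 + v) ^ s) (by fun_prop)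
    (antitoneOn_one_add_rpow (by linarith)) (fun v hv => by positivity)
    (integrable_one_add_abs_rpow hs) hζ hδ

lemma integrable_posLog_norm_sub_div_inv (hζ : ζ ∈ circleT) (hδ : 0 < δ) :
    Integrable (fun z => log⁺ (‖ζ - z‖ / δ)⁻¹) arcLength :=
  integrable_comp_norm_sub_div (f := fun v => log⁺ v⁻¹) (by fun_prop) antitoneOn_posLog_inv
    (fun _ _ => posLog_nonneg) integrable_posLog_inv_abs hζ hδ

lemma integral_posLog_norm_sub_div_inv_le (hζ : ζ ∈ circleT) (hδ : 0 < δ) :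
    ∫ z, log⁺ (‖ζ - z‖ / δ)⁻¹ ∂arcLength ≤ π / 2 * (∫ v : ℝ, log⁺ |v|⁻¹) * δ :=
  integral_comp_norm_sub_div_le (f := fun v => log⁺ v⁻¹) (by fun_prop) antitoneOn_posLog_inv
    (fun _ _ => posLog_nonneg) integrable_posLog_inv_abs hζ hδ

end ArcLength

section ComplementaryArc

lemma measurableSet_connectedComponentIn {X : Type*} [TopologicalSpace X] [MeasurableSpace X]
    [BorelSpace X] {s : Set X} (hs : MeasurableSet s) (x : X) :
    MeasurableSet (connectedComponentIn s x) := by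
  by_cases hx : x ∈ s
  · rw [connectedComponentIn_eq_image hx]
    exact hs.subtype_image isClosed_connectedComponent.measurableSet
  · rw [connectedComponentIn_eq_empty hx]
    exact .empty

lemma exists_Ioo_subset_compl_of_isClosed {X : Type*} [ConditionallyCompleteLinearOrder X]
    [TopologicalSpace X] [OrderTopology X] {s : Set X} (hs : IsClosed s) {a b t : X} (ha : a ∈ s)
    (hb : b ∈ s) (hat : a ≤ t) (htb : t ≤ b) (ht : t ∉ s) :
    ∃ p ∈ s, ∃ q ∈ s, t ∈ Ioo p q ∧ Ioo p q ⊆ sᶜ := by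
  have hleft : IsGreatest (s ∩ Iic t) (sSup (s ∩ Iic t)) :=
    (hs.inter isClosed_Iic).isGreatest_csSup ⟨a, ha, hat⟩ ⟨t, fun _ hx => hx.2⟩
  have hright : IsLeast (s ∩ Ici t) (sInf (s ∩ Ici t)) :=
    (hs.inter isClosed_Ici).isLeast_csInf ⟨b, hb, htb⟩ ⟨t, fun _ hx => hx.2⟩
  refine ⟨_, hleft.1.1, _, hright.1.1, ⟨lt_of_le_of_ne hleft.1.2 ?_, lt_of_le_of_ne hright.1.2 ?_⟩,
    fun x hx hxs => ?_⟩
  · exact ne_of_mem_of_not_mem hleft.1.1 ht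
  · exact (ne_of_mem_of_not_mem hright.1.1 ht).symm
  · rcases le_total x t with hxt | htx
    · exact hx.1.not_ge (hleft.2 ⟨hxs, hxt⟩)
    · exact hx.2.not_ge (hright.2 ⟨hxs, htx⟩)

variable {E : Set ℂ} {ζ z : ℂ}

lemma measurableSet_GammaSet (hE : MeasurableSet E) (ζ : ℂ) : MeasurableSet (GammaSet E ζ) := by
  have hcircle : MeasurableSet circleT := Metric.isClosed_sphere.measurableSet
  exact (hcircle.diff (measurableSet_connectedComponentIn (hcircle.diff hE) ζ)).inter
    ((Metric.continuous_infDist_pt E).measurable measurableSet_Iic)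

lemma mem_compArc_of_norm_sub_lt (hζ : ζ ∈ circleT) (hz : z ∈ circleT)
    (h : ‖ζ - z‖ < dE E ζ) : z ∈ compArc E ζ := by
  obtain ⟨t, -, rfl⟩ := exists_cpt_eq hζ 0
  obtain ⟨φ, hφ, rfl⟩ := exists_cpt_eq hz t
  have hsub : cpt '' uIcc t φ ⊆ circleT \ E := by
    rintro _ ⟨x, hx, rfl⟩
    refine ⟨cpt_mem_circleT x, fun hxE => ?_⟩
    have hle : |t - x| ≤ |t - φ| := by
      rw [abs_sub_comm t x, abs_sub_comm t φ]
      exact abs_sub_left_of_mem_uIcc hx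
    have hnear : dE E (cpt t) ≤ ‖cpt t - cpt x‖ := by
      rw [← dist_eq_norm]
      exact Metric.infDist_le_dist_of_mem hxE
    exact h.not_ge (hnear.trans (norm_cpt_sub_cpt_mono hle hφ))
  exact (isPreconnected_uIcc.image cpt continuous_cpt.continuousOn).subset_connectedComponentIn
    (mem_image_of_mem cpt left_mem_uIcc) hsub (mem_image_of_mem cpt right_mem_uIcc)

lemma dE_le_norm_sub_of_mem_GammaSet (hζ : ζ ∈ circleT) (hz : z ∈ GammaSet E ζ) :
    dE E ζ ≤ ‖ζ - z‖ :=
  not_lt.1 fun h => hz.1.2 (mem_compArc_of_norm_sub_lt hζ hz.1.1 h)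

/-- On the circle, the arc `cpt '' Ioo p q` is cut out by the half-plane where the projection onto
its midpoint exceeds `cos ((q - p) / 2)`, so a connected set leaving it meets `cpt p` or `cpt q`. -/
lemma compArc_cpt_subset_image {p q t : ℝ} (hp : cpt p ∈ E) (hq : cpt q ∈ E)
    (hpq : q ≤ p + 2 * π) (ht : t ∈ Ioo p q) (htE : cpt t ∉ E) :
    compArc E (cpt t) ⊆ cpt '' Ioo p q := by
  set m := (p + q) / 2 with hm
  set h := (q - p) / 2 with hh
  have hhmem : h ∈ Icc 0 π := by constructor <;> linarith [ht.1, ht.2]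
  let f : ℂ → ℝ := fun z => (z * cpt (-m)).re
  have hf : Continuous f := by fun_prop
  have hfcpt (x : ℝ) : f (cpt x) = cos |m - x| := by
    simp only [f]
    rw [← cpt_add, ← sub_eq_add_neg, cpt, Complex.exp_ofReal_mul_I_re, abs_sub_comm, cos_abs]
  have hlt (x : ℝ) (hx : |m - x| ≤ π) : cos h < f (cpt x) ↔ |m - x| < h := by
    rw [hfcpt, strictAntiOn_cos.lt_iff_gt hhmem ⟨abs_nonneg _, hx⟩]
  have homit (z : ℂ) (hz : z ∈ compArc E (cpt t)) : f z ≠ cos h := by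
    have hzE := connectedComponentIn_subset _ _ hz
    obtain ⟨x, hx, rfl⟩ := exists_cpt_eq hzE.1 m
    rw [hfcpt]
    intro hcos
    rcases eq_or_eq_neg_of_abs_eq (injOn_cos ⟨abs_nonneg _, hx⟩ hhmem hcos) with heq | heq
    · exact hzE.2 (by rwa [show x = p by linarith])
    · exact hzE.2 (by rwa [show x = q by linarith])
  have htmem : |m - t| < h := abs_lt.2 (by constructor <;> linarith [ht.1, ht.2])
  intro z hz
  obtain ⟨x, hx, rfl⟩ := exists_cpt_eq (connectedComponentIn_subset _ _ hz).1 m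
  have hlarge : cos h < f (cpt x) := by
    by_contra! hle
    obtain ⟨w, hw, hwcos⟩ := isPreconnected_connectedComponentIn.intermediate_value hz
      (mem_connectedComponentIn ⟨cpt_mem_circleT t, htE⟩) hf.continuousOn
      ⟨hle, ((hlt t (htmem.le.trans hhmem.2)).2 htmem).le⟩
    exact homit w hw hwcos
  have hxm := abs_lt.1 ((hlt x hx).1 hlarge)
  exact ⟨x, by constructor <;> linarith [hxm.1, hxm.2], rfl⟩

lemma exists_compArc_endpoints (hE : IsClosed E) (hEsub : E ⊆ circleT) (hne : E.Nonempty)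
    (hζ : ζ ∈ circleT \ E) :
    ∃ e₁ ∈ E, ∃ e₂ ∈ E, ∀ z ∈ compArc E ζ, min ‖e₁ - z‖ ‖e₂ - z‖ ≤ dE E z := by
  obtain ⟨t, -, rfl⟩ := exists_cpt_eq hζ.1 0
  obtain ⟨e, he⟩ := hne
  obtain ⟨φ, hφ, rfl⟩ := exists_cpt_eq (hEsub he) t
  rw [abs_le] at hφ
  obtain ⟨p, hp, q, hq, ht, hpq⟩ := exists_Ioo_subset_compl_of_isClosed
    (hE.preimage continuous_cpt) (a := φ - 2 * π) (b := φ + 2 * π) (t := t)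
    (by rwa [mem_preimage, cpt_periodic.sub_eq]) (by rwa [mem_preimage, cpt_periodic])
    (by linarith [pi_pos]) (by linarith [pi_pos]) hζ.2
  have hlength : q ≤ p + 2 * π := by
    by_contra! hlt
    exact hpq ⟨by linarith [pi_pos], hlt⟩ (by rwa [mem_preimage, cpt_periodic])
  refine ⟨cpt p, hp, cpt q, hq, fun z hz => ?_⟩
  obtain ⟨θ, hθ, rfl⟩ := compArc_cpt_subset_image hp hq hlength ht hζ.2 hz
  obtain ⟨e, he, hdist⟩ := hE.exists_infDist_eq_dist ⟨_, hp⟩ (cpt θ)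
  obtain ⟨ψ, hψ, rfl⟩ := exists_cpt_eq (hEsub he) θ
  rw [dE, hdist, dist_eq_norm, norm_sub_rev (cpt p), norm_sub_rev (cpt q)]
  rcases le_or_gt ψ p with hψp | hψp
  · refine min_le_of_left_le (norm_cpt_sub_cpt_mono ?_ hψ)
    rw [abs_of_pos (sub_pos.2 hθ.1), abs_of_pos (by linarith [hθ.1])]
    linarith
  · have hqψ : q ≤ ψ := not_lt.1 fun hψq => hpq ⟨hψp, hψq⟩ he
    refine min_le_of_right_le (norm_cpt_sub_cpt_mono ?_ hψ)
    rw [abs_of_neg (sub_neg.2 hθ.2), abs_of_neg (by linarith [hθ.2])]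
    linarith

end ComplementaryArc

section Kernel

/-- The Richter–Sundberg integrand for `ω t = t ^ α` with `β = 2 * α`, after rescaling all distances
by `dist(ζ,E)` and dropping the factor `dist(ζ,E) ^ (β - 2)`. -/
noncomputable def scaledKer (β : ℝ) (E : Set ℂ) (ζ z : ℂ) : ℝ :=
  rsProfile β (dE E z / dE E ζ) / (‖ζ - z‖ / dE E ζ) ^ 2

/-- The integrand of the `𝓛₁` condition, rescaled in the same way as `scaledKer`. -/
noncomputable def scaledLog (E : Set ℂ) (ζ z : ℂ) : ℝ :=
  log (dE E ζ / dE E z) / (‖ζ - z‖ / dE E ζ) ^ 2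

variable {α β : ℝ} {E : Set ℂ} {ζ z : ℂ}

lemma continuous_dE (E : Set ℂ) : Continuous (dE E) := Metric.continuous_infDist_pt E

lemma dE_pos (hE : IsClosed E) (hne : E.Nonempty) (hz : z ∉ E) : 0 < dE E z :=
  (hE.notMem_iff_infDist_pos hne).1 hz

lemma dE_le_two (hEsub : E ⊆ circleT) (hne : E.Nonempty) (hz : z ∈ circleT) : dE E z ≤ 2 := by
  obtain ⟨e, he⟩ := hne
  have hdist : dE E z ≤ dist z e := Metric.infDist_le_dist_of_mem he
  have hnorm := dist_le_norm_add_norm z e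
  rw [mem_sphere_zero_iff_norm.1 hz, mem_sphere_zero_iff_norm.1 (hEsub he)] at hnorm
  linarith

lemma measurable_scaledKer (β : ℝ) (E : Set ℂ) (ζ : ℂ) : Measurable (scaledKer β E ζ) :=
  ((measurable_rsProfile β).comp ((continuous_dE E).measurable.div_const _)).div (by fun_prop)

lemma measurable_scaledLog (E : Set ℂ) (ζ : ℂ) : Measurable (scaledLog E ζ) :=
  (measurable_log.comp ((continuous_dE E).measurable.const_div _)).div (by fun_prop)

lemma scaledKer_nonneg (hζ : 0 < dE E ζ) (hz : 0 < dE E z) : 0 ≤ scaledKer β E ζ z :=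
  div_nonneg (rsProfile_nonneg (div_pos hz hζ)) (sq_nonneg _)

lemma abs_dE_div_sub_one_le (hζ : 0 < dE E ζ) (z : ℂ) :
    |dE E z / dE E ζ - 1| ≤ ‖ζ - z‖ / dE E ζ := by
  have hlip := (Metric.lipschitz_infDist_pt E).dist_le_mul z ζ
  rw [NNReal.coe_one, one_mul, Real.dist_eq, dist_comm, dist_eq_norm] at hlip
  rw [div_sub_one hζ.ne', abs_div, abs_of_pos hζ]
  exact div_le_div_of_nonneg_right hlip hζ.le

lemma RSker_rpow_eq (hζ : 0 < dE E ζ) (hz : 0 < dE E z) :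
    RSker (fun t => t ^ α) E ζ z = dE E ζ ^ (2 * α - 2) * scaledKer (2 * α) E ζ z := by
  have hsq {t : ℝ} (ht : 0 < t) : (t ^ α) ^ 2 = t ^ (2 * α) := by
    rw [← rpow_mul_natCast ht.le, mul_comm α, Nat.cast_two]
  rw [RSker, scaledKer, rsProfile, hsq hζ, hsq hz, ← div_rpow hz.le hζ.le,
    log_rpow (div_pos hz hζ), div_rpow hz.le hζ.le, rpow_sub hζ, rpow_two]
  have := (rpow_pos_of_pos hζ (2 * α)).ne'
  field_simp

/-- The first term controls the power part and the diagonal; the next two control the logarithm on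
the complementary arc of `ζ`, whose endpoints are `e₁` and `e₂`. -/
lemma scaledKer_le (hβ : β ∈ Icc 0 1) (hE : IsClosed E) {e₁ e₂ : ℂ} (he₁ : e₁ ∈ E) (he₂ : e₂ ∈ E)
    (hmin : ∀ z ∈ compArc E ζ, min ‖e₁ - z‖ ‖e₂ - z‖ ≤ dE E z)
    (hζ : ζ ∈ circleT \ E) (hz : z ∈ circleT \ E) :
    scaledKer β E ζ z ≤ 9 * (1 + ‖ζ - z‖ / dE E ζ) ^ (β - 2) +
      4 * (log⁺ (‖e₁ - z‖ / dE E ζ)⁻¹ + log⁺ (‖e₂ - z‖ / dE E ζ)⁻¹) +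
        (GammaSet E ζ).indicator (scaledLog E ζ) z := by
  have hδ := dE_pos hE ⟨e₁, he₁⟩ hζ.2
  have hx : 0 < dE E z / dE E ζ := div_pos (dE_pos hE ⟨e₁, he₁⟩ hz.2) hδ
  have hxρ := abs_dE_div_sub_one_le hδ z
  have hlog₁ : 0 ≤ log⁺ (‖e₁ - z‖ / dE E ζ)⁻¹ := posLog_nonneg
  have hlog₂ : 0 ≤ log⁺ (‖e₂ - z‖ / dE E ζ)⁻¹ := posLog_nonneg
  by_cases hI : z ∈ compArc E ζ
  · have hlog {e : ℂ} (he : e ∈ E) (hle : ‖e - z‖ ≤ dE E z) :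
        log⁺ (dE E z / dE E ζ)⁻¹ ≤ log⁺ (‖e - z‖ / dE E ζ)⁻¹ := by
      have hpos : 0 < ‖e - z‖ := norm_pos_iff.2 (sub_ne_zero.2 (ne_of_mem_of_not_mem he hz.2))
      exact antitoneOn_posLog_inv (div_pos hpos hδ) hx (by gcongr)
    have hbound := rsProfile_div_sq_le hβ hx.le hxρ
    rw [indicator_of_notMem fun hΓ : z ∈ GammaSet E ζ => hΓ.1.2 hI, scaledKer]
    rcases min_le_iff.1 (hmin z hI) with h | h
    · linarith [hlog he₁ h]
    · linarith [hlog he₂ h]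
  · have hρ : 1 ≤ ‖ζ - z‖ / dE E ζ := (one_le_div₀ hδ).2
      (not_lt.1 fun h => hI (mem_compArc_of_norm_sub_lt hζ.1 hz.1 h))
    have hbound := rsProfile_div_sq_le_of_half_le hβ hx.le
      (by linarith [le_abs_self (dE E z / dE E ζ - 1)]) (by linarith : 1 / 2 ≤ ‖ζ - z‖ / dE E ζ)
    have hfar : log⁺ (dE E z / dE E ζ)⁻¹ / (‖ζ - z‖ / dE E ζ) ^ 2 =
        (GammaSet E ζ).indicator (scaledLog E ζ) z := by
      rcases le_or_gt (dE E z) (dE E ζ) with h | h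
      · have hΓ : z ∈ GammaSet E ζ := ⟨⟨hz.1, hI⟩, h⟩
        rw [indicator_of_mem hΓ, scaledLog, inv_div, posLog_eq_log]
        rw [← inv_div, abs_inv, abs_of_pos hx]
        exact (one_le_inv₀ hx).2 ((div_le_one hδ).2 h)
      · rw [indicator_of_notMem fun hΓ : z ∈ GammaSet E ζ => hΓ.2.not_gt h,
          (posLog_eq_zero_iff _).2, zero_div]
        rw [abs_inv, abs_of_pos hx]
        exact inv_le_one_of_one_le₀ ((one_le_div₀ hδ).2 h.le)
    rw [scaledKer]
    linarith

lemma scaledLog_le (hβ : β ≠ 0) (hζ : ζ ∈ circleT) (hδ : 0 < dE E ζ) (hz : z ∈ GammaSet E ζ)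
    (hd : 0 < dE E z) :
    scaledLog E ζ z ≤ log 2 * (scaledKer β E ζ z / rsProfile β 2⁻¹ +
      4 * (1 + ‖ζ - z‖ / dE E ζ) ^ (-2 : ℝ)) := by
  have hρ : 1 ≤ ‖ζ - z‖ / dE E ζ := (one_le_div₀ hδ).2 (dE_le_norm_sub_of_mem_GammaSet hζ hz)
  have hlog := log_inv_le_rsProfile_div_add hβ (div_pos hd hδ) (inv_pos.2 two_pos)
    (inv_lt_one_of_one_lt₀ one_lt_two)
  rw [inv_div, inv_inv] at hlog
  rw [scaledLog, scaledKer]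
  generalize ‖ζ - z‖ / dE E ζ = ρ at hρ ⊢
  generalize rsProfile β (dE E z / dE E ζ) = h at hlog ⊢
  have hsq : 1 / ρ ^ 2 ≤ 4 * (1 + ρ) ^ (-2 : ℝ) := by
    rw [rpow_neg (by linarith), rpow_two, ← div_eq_mul_inv, div_le_div_iff₀] <;> nlinarith
  calc log (dE E ζ / dE E z) / ρ ^ 2 ≤ log 2 * (h / rsProfile β 2⁻¹ + 1) / ρ ^ 2 := by gcongr
    _ = log 2 * (h / ρ ^ 2 / rsProfile β 2⁻¹ + 1 / ρ ^ 2) := by ring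
    _ ≤ _ := by gcongr

lemma le_scaledKer_of_norm_sub_le {e : ℂ} (he : e ∈ E) (hζe : ‖ζ - e‖ ≤ dE E ζ) (hδ : 0 < dE E ζ)
    (hd : 0 < dE E z) (hz : ‖e - z‖ ≤ dE E ζ / 2) :
    rsProfile β 2⁻¹ * (4 / 9) ≤ scaledKer β E ζ z := by
  have hx : dE E z / dE E ζ ∈ Ioc 0 2⁻¹ := by
    have hnear : dE E z ≤ ‖e - z‖ := by
      rw [← dist_eq_norm, dist_comm]
      exact Metric.infDist_le_dist_of_mem he
    refine ⟨div_pos hd hδ, (div_le_iff₀ hδ).2 ?_⟩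
    linarith
  have hρ_ge : 1 / 2 ≤ ‖ζ - z‖ / dE E ζ := by
    have := (neg_le_abs _).trans (abs_dE_div_sub_one_le hδ z)
    linarith [hx.2]
  have hρ_le : ‖ζ - z‖ / dE E ζ ≤ 3 / 2 := by
    rw [div_le_iff₀ hδ]
    linarith [norm_sub_le_norm_sub_add_norm_sub ζ e z]
  have hanti : rsProfile β 2⁻¹ ≤ rsProfile β (dE E z / dE E ζ) :=
    rsProfile_antitoneOn ⟨hx.1, hx.2.trans (by norm_num)⟩ (by constructor <;> norm_num) hx.2
  rw [scaledKer, div_eq_mul_inv]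
  refine mul_le_mul hanti ?_ (by norm_num) (rsProfile_nonneg hx.1)
  rw [le_inv_comm₀ (by norm_num) (by positivity)]
  nlinarith

end Kernel

section Estimates

variable {α β : ℝ} {E : Set ℂ} {ζ : ℂ}

lemma exists_scaledKer_le_add_indicator (hβ : β ∈ Ico 0 1) (hE : IsClosed E) (hEsub : E ⊆ circleT)
    (hne : E.Nonempty) :
    ∃ C > 0, ∀ ζ ∈ circleT \ E, ∃ M : ℂ → ℝ, Integrable M arcLength ∧
      ∫ z, M z ∂arcLength ≤ C * dE E ζ ∧ ∀ z ∈ circleT \ E,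
        scaledKer β E ζ z ≤ M z + (GammaSet E ζ).indicator (scaledLog E ζ) z := by
  set P := ∫ v : ℝ, (1 + |v|) ^ (β - 2)
  set L := ∫ v : ℝ, log⁺ |v|⁻¹
  have hL : 0 ≤ L := integral_nonneg fun v => posLog_nonneg
  refine ⟨π / 2 * (9 * P + 8 * L) + 1, by positivity, fun ζ hζ => ?_⟩
  have hδ := dE_pos hE hne hζ.2
  obtain ⟨e₁, he₁, e₂, he₂, hmin⟩ := exists_compArc_endpoints hE hEsub hne hζ
  have hpow := integrable_one_add_norm_sub_div_rpow (s := β - 2) (by linarith [hβ.2]) hζ.1 hδ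
  have hlog₁ := integrable_posLog_norm_sub_div_inv (hEsub he₁) hδ
  have hlog₂ := integrable_posLog_norm_sub_div_inv (hEsub he₂) hδ
  have hlog : Integrable (fun z => log⁺ (‖e₁ - z‖ / dE E ζ)⁻¹ + log⁺ (‖e₂ - z‖ / dE E ζ)⁻¹)
      arcLength := hlog₁.add hlog₂
  refine ⟨_, (hpow.const_mul 9).add (hlog.const_mul 4), ?_,
    fun z hz => scaledKer_le (Ico_subset_Icc_self hβ) hE he₁ he₂ hmin hζ hz⟩
  have hpow_le :=
    integral_one_add_norm_sub_div_rpow_le (s := β - 2) (by linarith [hβ.2]) hζ.1 hδ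
  have hlog_le₁ := integral_posLog_norm_sub_div_inv_le (hEsub he₁) hδ
  have hlog_le₂ := integral_posLog_norm_sub_div_inv_le (hEsub he₂) hδ
  rw [integral_add' (hpow.const_mul 9) (hlog.const_mul 4), integral_const_mul,
    integral_const_mul, integral_add hlog₁ hlog₂]
  linarith

lemma integrableOn_scaledLog (hE : IsClosed E) (hEcar : CarlesonSet E) (hζ : ζ ∈ circleT)
    (hδ : 0 < dE E ζ) : IntegrableOn (scaledLog E ζ) (GammaSet E ζ) arcLength := by
  have hmajorant : Integrable (fun z => |log (dE E ζ)| + |log (dE E z)|) arcLength :=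
    (integrable_const _).add hEcar.integrable_log.abs
  refine hmajorant.integrableOn.mono' (measurable_scaledLog E ζ).aestronglyMeasurable ?_
  filter_upwards [ae_restrict_mem (measurableSet_GammaSet hE.measurableSet ζ)] with z hz
  have hρ : 1 ≤ ‖ζ - z‖ / dE E ζ := (one_le_div₀ hδ).2 (dE_le_norm_sub_of_mem_GammaSet hζ hz)
  have hlog : |log (dE E ζ / dE E z)| ≤ |log (dE E ζ)| + |log (dE E z)| := by
    rcases eq_or_ne (dE E z) 0 with h | h
    · rw [h, div_zero, log_zero, abs_zero, add_zero]
      exact abs_nonneg _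
    · rw [log_div hδ.ne' h]
      exact abs_sub _ _
  rw [scaledLog, norm_div, norm_of_nonneg (sq_nonneg (_ / _)), norm_eq_abs]
  exact (div_le_self (abs_nonneg _) (one_le_pow₀ hρ)).trans hlog

lemma ae_scaledKer_nonneg (hE : IsClosed E) (hne : E.Nonempty) (hEz : MeasureZeroOnCircle E)
    (hδ : 0 < dE E ζ) : 0 ≤ᵐ[arcLength] scaledKer β E ζ := by
  filter_upwards [hEz.ae_notMem hE.measurableSet] with z hz
  exact scaledKer_nonneg hδ (dE_pos hE hne hz)

lemma ae_scaledKer_le {M : ℂ → ℝ} (hE : IsClosed E) (hEz : MeasureZeroOnCircle E)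
    (hM : ∀ z ∈ circleT \ E,
      scaledKer β E ζ z ≤ M z + (GammaSet E ζ).indicator (scaledLog E ζ) z) :
    scaledKer β E ζ ≤ᵐ[arcLength] M + (GammaSet E ζ).indicator (scaledLog E ζ) := by
  filter_upwards [ae_arcLength_mem_circleT, hEz.ae_notMem hE.measurableSet] with z hz hzE
  exact hM z ⟨hz, hzE⟩

lemma integrable_scaledKer (hβ : β ∈ Ico 0 1) (hE : IsClosed E) (hEsub : E ⊆ circleT)
    (hne : E.Nonempty) (hEz : MeasureZeroOnCircle E) (hEcar : CarlesonSet E)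
    (hζ : ζ ∈ circleT \ E) : Integrable (scaledKer β E ζ) arcLength := by
  obtain ⟨_, -, hmajorant⟩ := exists_scaledKer_le_add_indicator hβ hE hEsub hne
  obtain ⟨M, hM, -, hker_le⟩ := hmajorant ζ hζ
  have hδ := dE_pos hE hne hζ.2
  have hlog := (integrableOn_scaledLog hE hEcar hζ.1 hδ).integrable_indicator
    (measurableSet_GammaSet hE.measurableSet ζ)
  refine (hM.add hlog).mono' (measurable_scaledKer β E ζ).aestronglyMeasurable ?_
  filter_upwards [ae_scaledKer_le hE hEz hker_le, ae_scaledKer_nonneg hE hne hEz hδ] with z hz hz0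
  rwa [norm_of_nonneg hz0]

lemma exists_integral_scaledKer_le (hβ : β ∈ Ico 0 1) (hE : IsClosed E) (hEsub : E ⊆ circleT)
    (hne : E.Nonempty) (hEz : MeasureZeroOnCircle E) (hEcar : CarlesonSet E) :
    ∃ C > 0, ∀ ζ ∈ circleT \ E, ∫ z, scaledKer β E ζ z ∂arcLength ≤
      C * dE E ζ + ∫ z in GammaSet E ζ, scaledLog E ζ z ∂arcLength := by
  obtain ⟨C, hC, hmajorant⟩ := exists_scaledKer_le_add_indicator hβ hE hEsub hne
  refine ⟨C, hC, fun ζ hζ => ?_⟩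
  obtain ⟨M, hM, hM_le, hker_le⟩ := hmajorant ζ hζ
  have hΓ := measurableSet_GammaSet hE.measurableSet ζ
  have hlog := (integrableOn_scaledLog hE hEcar hζ.1 (dE_pos hE hne hζ.2)).integrable_indicator hΓ
  calc ∫ z, scaledKer β E ζ z ∂arcLength
      ≤ ∫ z, (M + (GammaSet E ζ).indicator (scaledLog E ζ)) z ∂arcLength :=
        integral_mono_ae (integrable_scaledKer hβ hE hEsub hne hEz hEcar hζ) (hM.add hlog)
          (ae_scaledKer_le hE hEz hker_le)
    _ = ∫ z, M z ∂arcLength + ∫ z in GammaSet E ζ, scaledLog E ζ z ∂arcLength := by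
        rw [integral_add' hM hlog, integral_indicator hΓ]
    _ ≤ C * dE E ζ + ∫ z in GammaSet E ζ, scaledLog E ζ z ∂arcLength := by gcongr

lemma setIntegral_scaledLog_le (hβ : β ≠ 0) (hE : IsClosed E) (hne : E.Nonempty)
    (hEz : MeasureZeroOnCircle E) (hEcar : CarlesonSet E) (hζ : ζ ∈ circleT \ E)
    (hker : Integrable (scaledKer β E ζ) arcLength) :
    ∫ z in GammaSet E ζ, scaledLog E ζ z ∂arcLength ≤
      log 2 * ((∫ z, scaledKer β E ζ z ∂arcLength) / rsProfile β 2⁻¹ +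
        4 * ∫ z, (1 + ‖ζ - z‖ / dE E ζ) ^ (-2 : ℝ) ∂arcLength) := by
  have hprof : 0 < rsProfile β 2⁻¹ := rsProfile_pos hβ (by norm_num) (by norm_num)
  have hδ := dE_pos hE hne hζ.2
  have hpow := integrable_one_add_norm_sub_div_rpow (s := -2) (by norm_num) hζ.1 hδ
  have hmajorant := ((hker.div_const (rsProfile β 2⁻¹)).add (hpow.const_mul 4)).const_mul (log 2)
  calc ∫ z in GammaSet E ζ, scaledLog E ζ z ∂arcLength
      ≤ ∫ z in GammaSet E ζ, log 2 * (scaledKer β E ζ z / rsProfile β 2⁻¹ +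
          4 * (1 + ‖ζ - z‖ / dE E ζ) ^ (-2 : ℝ)) ∂arcLength := by
        refine integral_mono_ae (integrableOn_scaledLog hE hEcar hζ.1 hδ) hmajorant.integrableOn ?_
        filter_upwards [ae_restrict_mem (measurableSet_GammaSet hE.measurableSet ζ),
          ae_restrict_of_ae (hEz.ae_notMem hE.measurableSet)] with z hz hzE
        exact scaledLog_le hβ hζ.1 hδ hz (dE_pos hE hne hzE)
    _ ≤ ∫ z, log 2 * (scaledKer β E ζ z / rsProfile β 2⁻¹ +
          4 * (1 + ‖ζ - z‖ / dE E ζ) ^ (-2 : ℝ)) ∂arcLength := by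
        refine setIntegral_le_integral hmajorant ?_
        filter_upwards [ae_scaledKer_nonneg (β := β) hE hne hEz hδ] with z hz
        have : 0 ≤ scaledKer β E ζ z := hz
        positivity
    _ = log 2 * ((∫ z, scaledKer β E ζ z ∂arcLength) / rsProfile β 2⁻¹ +
          4 * ∫ z, (1 + ‖ζ - z‖ / dE E ζ) ^ (-2 : ℝ) ∂arcLength) := by
        rw [integral_const_mul, integral_add (hker.div_const _) (hpow.const_mul 4),
          integral_div, integral_const_mul]

lemma exists_setIntegral_scaledLog_le (hβ : β ≠ 0) (hE : IsClosed E) (hne : E.Nonempty)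
    (hEz : MeasureZeroOnCircle E) (hEcar : CarlesonSet E) :
    ∃ C > 0, ∀ ζ ∈ circleT \ E, Integrable (scaledKer β E ζ) arcLength →
      ∫ z in GammaSet E ζ, scaledLog E ζ z ∂arcLength ≤
        C * (∫ z, scaledKer β E ζ z ∂arcLength + dE E ζ) := by
  have hprof : 0 < rsProfile β 2⁻¹ := rsProfile_pos hβ (by norm_num) (by norm_num)
  set P := ∫ v : ℝ, (1 + |v|) ^ (-2 : ℝ)
  refine ⟨log 2 * ((rsProfile β 2⁻¹)⁻¹ + 2 * π * P), by positivity, fun ζ hζ hker => ?_⟩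
  have hδ := dE_pos hE hne hζ.2
  have hpow_le := integral_one_add_norm_sub_div_rpow_le (s := -2) (by norm_num) hζ.1 hδ
  refine (setIntegral_scaledLog_le hβ hE hne hEz hEcar hζ hker).trans ?_
  have hker0 : 0 ≤ ∫ z, scaledKer β E ζ z ∂arcLength :=
    integral_nonneg_of_ae (ae_scaledKer_nonneg hE hne hEz hδ)
  generalize ∫ z, scaledKer β E ζ z ∂arcLength = K at hker0 ⊢
  calc _ ≤ log 2 * (K / rsProfile β 2⁻¹ + 4 * (π / 2 * P * dE E ζ)) := by gcongr
    _ = log 2 * ((rsProfile β 2⁻¹)⁻¹ * K + 2 * π * P * dE E ζ) := by ring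
    _ ≤ log 2 * ((rsProfile β 2⁻¹)⁻¹ * (K + dE E ζ) + 2 * π * P * (K + dE E ζ)) := by
        gcongr <;> linarith
    _ = log 2 * ((rsProfile β 2⁻¹)⁻¹ + 2 * π * P) * (K + dE E ζ) := by ring

lemma mul_dE_le_integral_scaledKer (hE : IsClosed E) (hEsub : E ⊆ circleT) (hne : E.Nonempty)
    (hEz : MeasureZeroOnCircle E) (hζ : ζ ∈ circleT \ E)
    (hker : Integrable (scaledKer β E ζ) arcLength) :
    rsProfile β 2⁻¹ * (4 / 9) * dE E ζ ≤ ∫ z, scaledKer β E ζ z ∂arcLength := by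
  have hprof : 0 ≤ rsProfile β 2⁻¹ := rsProfile_nonneg (by norm_num)
  have hδ := dE_pos hE hne hζ.2
  obtain ⟨e, he, hdist⟩ := hE.exists_infDist_eq_dist hne ζ
  have hζe : ‖ζ - e‖ = dE E ζ := by rw [← dist_eq_norm, ← hdist, dE]
  have hball : MeasurableSet (Metric.closedBall e (dE E ζ / 2)) :=
    Metric.isClosed_closedBall.measurableSet
  have hδπ : dE E ζ / 2 ≤ π := by linarith [dE_le_two hEsub hne hζ.1, pi_gt_three]
  calc rsProfile β 2⁻¹ * (4 / 9) * dE E ζ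
      ≤ arcLength.real (Metric.closedBall e (dE E ζ / 2)) * (rsProfile β 2⁻¹ * (4 / 9)) := by
        have := two_mul_le_arcLength_closedBall (hEsub he) (by positivity) hδπ
        rw [mul_comm]
        gcongr
        linarith
    _ = ∫ _ in Metric.closedBall e (dE E ζ / 2), rsProfile β 2⁻¹ * (4 / 9) ∂arcLength := by
        rw [setIntegral_const, smul_eq_mul]
    _ ≤ ∫ z in Metric.closedBall e (dE E ζ / 2), scaledKer β E ζ z ∂arcLength := by
        refine integral_mono_ae (integrable_const _) hker.integrableOn ?_
        filter_upwards [ae_restrict_mem hball,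
          ae_restrict_of_ae (hEz.ae_notMem hE.measurableSet)] with z hz hzE
        rw [mem_closedBall_iff_norm'] at hz
        exact le_scaledKer_of_norm_sub_le he hζe.le hδ (dE_pos hE hne hzE) hz
    _ ≤ ∫ z, scaledKer β E ζ z ∂arcLength :=
        setIntegral_le_integral hker (ae_scaledKer_nonneg hE hne hEz hδ)

lemma locDir_rpow_eq (hE : IsClosed E) (hne : E.Nonempty) (hEz : MeasureZeroOnCircle E)
    (hδ : 0 < dE E ζ) :
    locDir (fun t => t ^ α) E ζ =
      dE E ζ ^ (2 * α - 1) * ((∫ z, scaledKer (2 * α) E ζ z ∂arcLength) / (2 * π * dE E ζ)) := by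
  have hae : RSker (fun t => t ^ α) E ζ =ᵐ[arcLength]
      fun z => dE E ζ ^ (2 * α - 2) * scaledKer (2 * α) E ζ z := by
    filter_upwards [hEz.ae_notMem hE.measurableSet] with z hz
    exact RSker_rpow_eq hδ (dE_pos hE hne hz)
  have hmeas : AEStronglyMeasurable (RSker (fun t => t ^ α) E ζ) arcLength :=
    ((measurable_scaledKer _ E ζ).const_mul _).aestronglyMeasurable.congr hae.symm
  rw [locDir, circInt_eq_integral hmeas, integral_congr_ae hae, integral_const_mul,
    show 2 * α - 1 = 2 * α - 2 + 1 by ring, rpow_add_one hδ.ne']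
  field_simp

lemma L1Set_iff_setIntegral_scaledLog_le (hE : IsClosed E) (hne : E.Nonempty) :
    L1Set E ↔ ∃ C > 0, ∀ ζ ∈ circleT \ E,
      ∫ z in GammaSet E ζ, scaledLog E ζ z ∂arcLength ≤ C * dE E ζ := by
  refine exists_congr fun C => and_congr_right fun _ => forall₂_congr fun ζ hζ => ?_
  have hδ := dE_pos hE hne hζ.2
  have hscale : (fun z => log (dE E ζ / dE E z) / ‖ζ - z‖ ^ 2) =
      fun z => scaledLog E ζ z / dE E ζ ^ 2 := by
    ext z
    rw [scaledLog]
    field_simp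
  rw [hscale, circIntOn_eq_setIntegral (measurableSet_GammaSet hE.measurableSet ζ)
    ((measurable_scaledLog E ζ).div_const _).aestronglyMeasurable, integral_div,
    div_le_iff₀ (by positivity), div_mul_eq_mul_div, sq, ← mul_assoc,
    mul_div_cancel_right₀ _ hδ.ne']

end Estimates

section LocalDirichlet

variable {α : ℝ} {E : Set ℂ}

lemma exists_mul_rpow_le_locDir (hα : α ∈ Ioo 0 (1 / 2)) (hE : IsClosed E) (hEsub : E ⊆ circleT)
    (hne : E.Nonempty) (hEz : MeasureZeroOnCircle E) (hEcar : CarlesonSet E) :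
    ∃ c > 0, ∀ ζ ∈ circleT \ E, c * dE E ζ ^ (2 * α - 1) ≤ locDir (fun t => t ^ α) E ζ := by
  have hβ : 2 * α ∈ Ioo 0 1 := by constructor <;> linarith [hα.1, hα.2]
  have hprof : 0 < rsProfile (2 * α) 2⁻¹ := rsProfile_pos hβ.1.ne' (by norm_num) (by norm_num)
  refine ⟨rsProfile (2 * α) 2⁻¹ * (4 / 9) / (2 * π), by positivity, fun ζ hζ => ?_⟩
  have hδ := dE_pos hE hne hζ.2
  rw [locDir_rpow_eq hE hne hEz hδ, mul_comm]
  refine mul_le_mul_of_nonneg_left ?_ (by positivity)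
  rw [mul_comm (2 * π), ← div_div _ (dE E ζ)]
  gcongr
  exact (le_div_iff₀ hδ).2 (mul_dE_le_integral_scaledKer hE hEsub hne hEz hζ
    (integrable_scaledKer (Ioo_subset_Ico_self hβ) hE hEsub hne hEz hEcar hζ))

lemma exists_locDir_le_mul_rpow_iff_L1Set (hα : α ∈ Ioo 0 (1 / 2)) (hE : IsClosed E)
    (hEsub : E ⊆ circleT) (hne : E.Nonempty) (hEz : MeasureZeroOnCircle E)
    (hEcar : CarlesonSet E) :
    (∃ C > 0, ∀ ζ ∈ circleT \ E, locDir (fun t => t ^ α) E ζ ≤ C * dE E ζ ^ (2 * α - 1)) ↔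
      L1Set E := by
  have hβ : 2 * α ∈ Ioo 0 1 := by constructor <;> linarith [hα.1, hα.2]
  obtain ⟨A, hA, hker⟩ :=
    exists_integral_scaledKer_le (Ioo_subset_Ico_self hβ) hE hEsub hne hEz hEcar
  obtain ⟨B, hB, hlog⟩ := exists_setIntegral_scaledLog_le hβ.1.ne' hE hne hEz hEcar
  have hiff (C ζ) (hζ : ζ ∈ circleT \ E) :
      locDir (fun t => t ^ α) E ζ ≤ C * dE E ζ ^ (2 * α - 1) ↔
        ∫ z, scaledKer (2 * α) E ζ z ∂arcLength ≤ C * (2 * π * dE E ζ) := by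
    have hδ := dE_pos hE hne hζ.2
    rw [locDir_rpow_eq hE hne hEz hδ, mul_comm C, mul_le_mul_iff_right₀ (by positivity),
      div_le_iff₀ (by positivity)]
  rw [L1Set_iff_setIntegral_scaledLog_le hE hne]
  constructor
  · rintro ⟨C, hC, hupper⟩
    refine ⟨B * (C * (2 * π) + 1), by positivity, fun ζ hζ => ?_⟩
    have := (hiff C ζ hζ).1 (hupper ζ hζ)
    calc _ ≤ B * (∫ z, scaledKer (2 * α) E ζ z ∂arcLength + dE E ζ) := hlog ζ hζ
          (integrable_scaledKer (Ioo_subset_Ico_self hβ) hE hEsub hne hEz hEcar hζ)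
      _ ≤ B * (C * (2 * π * dE E ζ) + dE E ζ) := by gcongr
      _ = _ := by ring
  · rintro ⟨C, hC, hupper⟩
    refine ⟨(A + C) / (2 * π), by positivity, fun ζ hζ => (hiff _ ζ hζ).2 ?_⟩
    calc _ ≤ A * dE E ζ + ∫ z in GammaSet E ζ, scaledLog E ζ z ∂arcLength := hker ζ hζ
      _ ≤ A * dE E ζ + C * dE E ζ := by gcongr; exact hupper ζ hζ
      _ = _ := by field_simp

end LocalDirichlet

/-- For `α ∈ (0,1/2)` and a Carleson set `E ⊆ 𝕋` of measure zero, the two-sided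
estimate `D_ζ(f_{α,E}) ≍ dist(ζ,E)^{2α−1}` (uniformly in `ζ ∈ 𝕋∖E`) holds iff `E` is an
`𝓛₁`-set. -/
theorem statement0 (α : ℝ) (hα : α ∈ Set.Ioo (0 : ℝ) (1 / 2))
    (E : Set ℂ) (hEc : IsClosed E) (hEsub : E ⊆ circleT)
    (hEz : MeasureZeroOnCircle E) (hEcar : CarlesonSet E) :
    (∃ c₁ > (0:ℝ), ∃ c₂ > (0:ℝ), ∀ ζ ∈ circleT \ E,
        c₁ * dE E ζ ^ (2 * α - 1) ≤ locDir (fun t => t ^ α) E ζ ∧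
        locDir (fun t => t ^ α) E ζ ≤ c₂ * dE E ζ ^ (2 * α - 1)) ↔ L1Set E := by
  rcases E.eq_empty_or_nonempty with rfl | hne
  · have h2α : 2 * α - 1 ≠ 0 := by linarith [hα.2]
    have hzero : dE ∅ = 0 := funext fun _ => Metric.infDist_empty
    simp [L1Set, locDir, circInt, circIntOn, RSker, hzero, zero_rpow hα.1.ne', zero_rpow h2α]
  · rw [← exists_locDir_le_mul_rpow_iff_L1Set hα hEc hEsub hne hEz hEcar]
    obtain ⟨c, hc, hlower⟩ := exists_mul_rpow_le_locDir hα hEc hEsub hne hEz hEcar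
    constructor
    · rintro ⟨_, _, C, hC, hbounds⟩
      exact ⟨C, hC, fun ζ hζ => (hbounds ζ hζ).2⟩
    · rintro ⟨C, hC, hupper⟩
      exact ⟨c, hc, C, hC, fun ζ hζ => ⟨hlower ζ hζ, hupper ζ hζ⟩⟩
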